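/- arXiv:2108.11491 — 5 statements merged into one kernel-verified Lean document; each statement's English description precedes it below -/
import Mathlib

section
/- Let U be an open subset of the Euclidean space E = EuclideanSpace ℝ (Fin n) and let V ⊆ E be an open set with V ∩ frontier U ≠ ∅. Then there exists a point x ∈ V ∩ frontier U such that the formal tangent space 𝒯ₓ(frontier U) is a proper submodule of E (i.e. 𝒯ₓ(frontier U) ≠ ⊤). -/
/-!
Choose a point `u` outside a closed set `S`, close to a given boundary point of `S`, and let `x` be
a point of `S` nearest to `u`. A smooth curve in `S` through `x` minimizes the squared distance to
`u` at `x`, so its velocity there is orthogonal to `x - u ≠ 0`. Formal tangent spaces do not depend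
on the norm, so in finite dimension one may always work in a Euclidean space. For open `U`, the
closed set `S = frontier U` has empty interior, hence is its own frontier.
-/

/-- The formal tangent space of a subset `S` of a real normed space at a point `x`:
the span of all derivatives at `0` of smooth curves through `x` lying in `S`. -/
def formalTangent {E : Type*} [NormedAddCommGroup E] [NormedSpace ℝ E]
    (S : Set E) (x : E) : Submodule ℝ E :=
  Submodule.span ℝ
    {v : E | ∃ γ : ℝ → E, ContDiff ℝ (⊤ : ℕ∞) γ ∧ γ 0 = x ∧ Set.range γ ⊆ S ∧ deriv γ 0 = v}

open Filter Set

open scoped Topology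

theorem frontier_frontier_of_isOpen {X : Type*} [TopologicalSpace X] {U : Set X}
    (hU : IsOpen U) : frontier (frontier U) = frontier U := by
  rw [isClosed_frontier.frontier_eq, ← frontier_compl, interior_frontier hU.isClosed_compl,
    sdiff_empty]

section NormedSpace

variable {E F : Type*} [NormedAddCommGroup E] [NormedSpace ℝ E]
  [NormedAddCommGroup F] [NormedSpace ℝ F]

theorem deriv_mem_formalTangent {S : Set E} {x : E} {γ : ℝ → E} (hγ : ContDiff ℝ (⊤ : ℕ∞) γ)
    (h0 : γ 0 = x) (hS : range γ ⊆ S) : deriv γ 0 ∈ formalTangent S x :=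
  Submodule.subset_span ⟨γ, hγ, h0, hS, rfl⟩

theorem formalTangent_le_iff {S : Set E} {x : E} {p : Submodule ℝ E} :
    formalTangent S x ≤ p ↔
      ∀ γ : ℝ → E, ContDiff ℝ (⊤ : ℕ∞) γ → γ 0 = x → range γ ⊆ S → deriv γ 0 ∈ p := by
  refine Submodule.span_le.trans ⟨fun h γ hγ h0 hS ↦ h ⟨γ, hγ, h0, hS, rfl⟩, ?_⟩
  rintro h _ ⟨γ, hγ, h0, hS, rfl⟩
  exact h γ hγ h0 hS

theorem map_fderiv_formalTangent_le {f : E → F} (hf : ContDiff ℝ (⊤ : ℕ∞) f) {S : Set E}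
    {T : Set F} (hST : MapsTo f S T) (x : E) :
    (formalTangent S x).map (fderiv ℝ f x).toLinearMap ≤ formalTangent T (f x) := by
  rw [Submodule.map_le_iff_le_comap, formalTangent_le_iff]
  rintro γ hγ rfl hS
  have hderiv : deriv (f ∘ γ) 0 = fderiv ℝ f (γ 0) (deriv γ 0) :=
    fderiv_comp_deriv 0 (hf.differentiable (by simp) _) (hγ.differentiable (by simp) _)
  have hT : range (f ∘ γ) ⊆ T := range_subset_iff.2 fun t ↦ hST (hS (mem_range_self t))
  rw [Submodule.mem_comap, ContinuousLinearMap.coe_coe, ← hderiv]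
  exact deriv_mem_formalTangent (hf.comp hγ) (Function.comp_apply ..) hT

theorem formalTangent_le_ker_of_isLocalExtrOn {f : E → ℝ} {f' : E →L[ℝ] ℝ} {S : Set E} {x : E}
    (hx : IsLocalExtrOn f S x) (hf : HasFDerivWithinAt f f' S x) :
    formalTangent S x ≤ f'.ker := by
  rw [formalTangent_le_iff]
  rintro γ hγ rfl hS
  have hmem : ∀ᶠ t in 𝓝 0, γ t ∈ S := .of_forall fun t ↦ hS (mem_range_self t)
  have hextr : IsLocalExtr (f ∘ γ) 0 :=
    hx.comp_tendsto (tendsto_nhdsWithin_iff.2 ⟨hγ.continuous.continuousAt, hmem⟩)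
  exact hextr.hasDerivAt_eq_zero
    (hf.comp_hasDerivAt 0 (hγ.differentiable (by simp) 0).hasDerivAt hmem)

theorem exists_notMem_exists_mem_inter_frontier_infDist_eq_dist [FiniteDimensional ℝ E]
    {S V : Set E} (hS : IsClosed S) (hV : IsOpen V) (h : (V ∩ frontier S).Nonempty) :
    ∃ u ∉ S, ∃ x ∈ V ∩ frontier S, Metric.infDist u S = dist u x := by
  obtain ⟨y, hyV, hyS⟩ := h
  obtain ⟨ε, hε, hball⟩ := Metric.isOpen_iff.1 hV y hyV
  have hy : y ∈ closure Sᶜ := frontier_subset_closure (frontier_compl S ▸ hyS)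
  obtain ⟨u, hu, hyu⟩ := Metric.mem_closure_iff.1 hy (ε / 2) (half_pos hε)
  have hSc : Sᶜ ≠ univ := (compl_ne_univ (s := S)).2 ⟨y, hS.frontier_subset hyS⟩
  obtain ⟨x, hxS, hux⟩ := exists_mem_frontier_infDist_compl_eq_dist hu hSc
  rw [frontier_compl] at hxS
  rw [compl_compl] at hux
  refine ⟨u, hu, x, ⟨hball ?_, hxS⟩, hux⟩
  calc dist x y ≤ dist u x + dist u y := dist_triangle_left x y u
    _ ≤ dist u y + dist u y := by
      gcongr
      exact hux ▸ Metric.infDist_le_dist_of_mem (hS.frontier_subset hyS)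
    _ < ε := by rw [dist_comm u y]; linarith

end NormedSpace

section InnerProductSpace

variable {E : Type*} [NormedAddCommGroup E] [InnerProductSpace ℝ E]

theorem formalTangent_le_orthogonal_of_infDist_eq_dist {S : Set E} {u x : E}
    (h : Metric.infDist u S = dist u x) : formalTangent S x ≤ (ℝ ∙ (x - u))ᗮ := by
  have hmin : IsMinOn (fun z ↦ ‖z - u‖ ^ 2) S x := fun z hz ↦ by
    have hle : dist x u ≤ dist z u := by
      rw [dist_comm x, dist_comm z, ← h]
      exact Metric.infDist_le_dist_of_mem hz
    simp only [dist_eq_norm] at hle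
    exact pow_le_pow_left₀ (norm_nonneg _) hle 2
  have hderiv := ((hasFDerivAt_id (𝕜 := ℝ) x).sub_const u).norm_sq
  refine (formalTangent_le_ker_of_isLocalExtrOn (.inl hmin.localize)
    hderiv.hasFDerivWithinAt).trans fun v hv ↦ ?_
  rw [Submodule.mem_orthogonal_singleton_iff_inner_right]
  simpa [inner_sub_left] using hv

theorem exists_mem_inter_frontier_formalTangent_ne_top [FiniteDimensional ℝ E] {S V : Set E}
    (hS : IsClosed S) (hV : IsOpen V) (h : (V ∩ frontier S).Nonempty) :
    ∃ x ∈ V ∩ frontier S, formalTangent S x ≠ ⊤ := by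
  obtain ⟨u, hu, x, hx, hux⟩ := exists_notMem_exists_mem_inter_frontier_infDist_eq_dist hS hV h
  refine ⟨x, hx, fun htop ↦ hu ?_⟩
  have horth : (ℝ ∙ (x - u))ᗮ = ⊤ :=
    top_le_iff.1 (htop ▸ formalTangent_le_orthogonal_of_infDist_eq_dist hux)
  have hxu : x = u := by
    simpa [Submodule.orthogonal_eq_top_iff, sub_eq_zero] using horth
  exact hxu ▸ hS.frontier_subset hx.2

end InnerProductSpace

theorem stmt0_general {E : Type*} [NormedAddCommGroup E] [NormedSpace ℝ E]
    [FiniteDimensional ℝ E] {S V : Set E} (hS : IsClosed S) (hV : IsOpen V)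
    (h : (V ∩ frontier S).Nonempty) :
    ∃ x ∈ V ∩ frontier S, formalTangent S x ≠ ⊤ := by
  let e : E ≃L[ℝ] EuclideanSpace ℝ (Fin (Module.finrank ℝ E)) := toEuclidean
  have hfrontier : e.symm ⁻¹' frontier S = frontier (e.symm ⁻¹' S) :=
    e.symm.toHomeomorph.preimage_frontier S
  have hne : (e.symm ⁻¹' V ∩ frontier (e.symm ⁻¹' S)).Nonempty := by
    rw [← hfrontier, ← preimage_inter]
    exact h.preimage e.symm.surjective
  obtain ⟨x, hx, hxtop⟩ := exists_mem_inter_frontier_formalTangent_ne_top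
    (hS.preimage e.symm.continuous) (hV.preimage e.symm.continuous) hne
  rw [← hfrontier, ← preimage_inter] at hx
  refine ⟨e.symm x, hx, fun htop ↦ hxtop ?_⟩
  have hmaps : MapsTo e S (e.symm ⁻¹' S) := fun z hz ↦ by simpa using hz
  have hle := map_fderiv_formalTangent_le e.contDiff hmaps (e.symm x)
  rw [htop, e.fderiv, Submodule.map_top, e.apply_symm_apply] at hle
  exact top_le_iff.1 ((LinearEquiv.range e.toLinearEquiv).ge.trans hle)

theorem stmt0 {n : ℕ} (U V : Set (EuclideanSpace ℝ (Fin n)))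
    (hU : IsOpen U) (hV : IsOpen V) (hne : (V ∩ frontier U).Nonempty) :
    ∃ x ∈ V ∩ frontier U, formalTangent (frontier U) x ≠ ⊤ := by
  rw [← frontier_frontier_of_isOpen hU] at hne
  simpa only [frontier_frontier_of_isOpen hU] using stmt0_general isClosed_frontier hV hne
end

section
/- Let E and F be real normed spaces, S ⊆ E, x ∈ S and v ∈ F. Then the formal tangent space of the product set satisfies 𝒯_{(x,v)}(S ×ˢ (Set.univ : Set F)) = (𝒯ₓS).prod ⊤, i.e. it equals the product of the formal tangent space of S at x with all of F. -/
/-!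
Formal tangent spaces are functorial: the differential of a smooth map carrying `S` into `T` carries
tangent vectors of `S` to tangent vectors of `T`. For a product, the two projections give one
inclusion, and the inclusions of the two slices through the base point give the other. On the
whole space, straight lines realise every vector.
-/

section FormalTangent

variable {E F : Type*} [NormedAddCommGroup E] [NormedSpace ℝ E]
  [NormedAddCommGroup F] [NormedSpace ℝ F]

theorem map_formalTangent_le {S : Set E} {T : Set F} {x : E} {f : E → F} {f' : E →L[ℝ] F}
    (hf : ContDiff ℝ (⊤ : ℕ∞) f) (hf' : HasFDerivAt f f' x) (hST : Set.MapsTo f S T) :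
    (formalTangent S x).map (f' : E →ₗ[ℝ] F) ≤ formalTangent T (f x) := by
  refine Submodule.map_le_iff_le_comap.2 (Submodule.span_le.2 ?_)
  rintro _ ⟨γ, hγ, rfl, hγS, rfl⟩
  have hγ' : HasDerivAt γ (deriv γ 0) 0 := (hγ.differentiable (by simp) 0).hasDerivAt
  have hfγT : Set.range (f ∘ γ) ⊆ T :=
    Set.range_subset_iff.2 fun t => hST (hγS (Set.mem_range_self t))
  exact Submodule.subset_span
    ⟨f ∘ γ, hf.comp hγ, rfl, hfγT, (hf'.comp_hasDerivAt 0 hγ').deriv⟩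

theorem formalTangent_univ (x : E) : formalTangent Set.univ x = ⊤ := by
  refine eq_top_iff.2 fun v _ => ?_
  have hline : HasDerivAt (fun t : ℝ => x + t • v) v 0 := by
    simpa using ((hasDerivAt_id (0 : ℝ)).smul_const v).const_add x
  exact Submodule.subset_span
    ⟨fun t => x + t • v, by fun_prop, by simp, Set.subset_univ _, hline.deriv⟩

theorem formalTangent_prod {S : Set E} {T : Set F} {x : E} {y : F} (hx : x ∈ S) (hy : y ∈ T) :
    formalTangent (S ×ˢ T) (x, y) = (formalTangent S x).prod (formalTangent T y) := by
  have hfst : Set.MapsTo Prod.fst (S ×ˢ T) S := fun _ hp => hp.1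
  have hsnd : Set.MapsTo Prod.snd (S ×ˢ T) T := fun _ hp => hp.2
  have hleft : Set.MapsTo (fun s => (s, y)) S (S ×ˢ T) := fun _ hs => ⟨hs, hy⟩
  have hright : Set.MapsTo (fun t => (x, t)) T (S ×ˢ T) := fun _ ht => ⟨hx, ht⟩
  apply le_antisymm
  · exact (Submodule.le_prod_iff ℝ E F).2
      ⟨map_formalTangent_le contDiff_fst hasFDerivAt_fst hfst,
        map_formalTangent_le contDiff_snd hasFDerivAt_snd hsnd⟩
  · exact (Submodule.prod_le_iff ℝ E F).2
      ⟨map_formalTangent_le (contDiff_prodMk_left y) (hasFDerivAt_prodMk_left x y) hleft,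
        map_formalTangent_le (contDiff_prodMk_right x) (hasFDerivAt_prodMk_right x y) hright⟩

end FormalTangent

theorem stmt4 {E F : Type*} [NormedAddCommGroup E] [NormedSpace ℝ E]
    [NormedAddCommGroup F] [NormedSpace ℝ F]
    (S : Set E) (x : E) (hx : x ∈ S) (v : F) :
    formalTangent (S ×ˢ (Set.univ : Set F)) (x, v)
      = (formalTangent S x).prod (⊤ : Submodule ℝ F) := by
  rw [formalTangent_prod hx (Set.mem_univ v), formalTangent_univ]
end

section
/- Let X be a topological space and A : X → Matrix (Fin m) (Fin k) ℝ a continuous map. Then the set of points x ∈ X at which the rank function y ↦ (A y).rank is locally constant (i.e. there is a neighbourhood N of x with (A y).rank = (A x).rank for all y ∈ N) is open and dense in X. -/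
/-!
The rank of a matrix is the size of a largest nonvanishing minor, and a nonvanishing minor stays
nonzero under small perturbations, so the rank is lower semicontinuous. It also takes finitely many
values, hence attains a maximum over every nonempty open set; near a maximum point the rank can
neither drop, by semicontinuity, nor rise.
-/

open Filter Module Set Topology

section LocallyConstant

variable {X α : Type*} [TopologicalSpace X]

theorem isOpen_setOfPred_eventually_eq_nhds (f : X → α) : IsOpen {x | ∀ᶠ y in 𝓝 x, f y = f x} := by
  refine isOpen_iff_mem_nhds.2 fun x (hx : ∀ᶠ y in 𝓝 x, f y = f x) ↦ ?_
  filter_upwards [hx.eventually_nhds, hx] with y hy hyx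
  simpa only [mem_ofPred_eq, hyx] using hy

variable [LinearOrder α] {f : X → α}

theorem eventually_le_of_lowerSemicontinuousAt (hwf : (range f).WellFoundedOn (· > ·)) {x : X}
    (hf : LowerSemicontinuousAt f x) : ∀ᶠ y in 𝓝 x, f x ≤ f y := by
  rcases {y | f y < f x}.eq_empty_or_nonempty with hempty | hne
  · exact .of_forall fun y ↦ not_lt.1 (eq_empty_iff_forall_notMem.1 hempty y)
  · obtain ⟨z, hzx : f z < f x, hz⟩ := (wellFoundedOn_range.1 hwf).has_min _ hne
    filter_upwards [hf (f z) hzx] with y hzy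
    exact not_lt.1 fun hyx ↦ hz y hyx hzy

theorem dense_setOfPred_eventually_eq_nhds_of_lowerSemicontinuous
    (hwf : (range f).WellFoundedOn (· > ·)) (hf : LowerSemicontinuous f) :
    Dense {x | ∀ᶠ y in 𝓝 x, f y = f x} := by
  refine dense_iff_inter_open.2 fun U hU hne ↦ ?_
  obtain ⟨x, hxU, hmax⟩ := (wellFoundedOn_range.1 hwf).has_min U hne
  refine ⟨x, hxU, ?_⟩
  filter_upwards [hU.mem_nhds hxU, eventually_le_of_lowerSemicontinuousAt hwf (hf x)] with y hyU hxy
  exact (not_lt.1 (hmax y hyU)).antisymm hxy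

end LocallyConstant

section Minors

variable {m n : Type*} [Fintype n]

theorem finite_range_matrix_rank {R : Type*} [CommSemiring R] [StrongRankCondition R] :
    (range (Matrix.rank : Matrix m n R → ℕ)).Finite :=
  (finite_Iic (Fintype.card n)).subset (range_subset_iff.2 Matrix.rank_le_card_width)

theorem card_le_rank_of_det_submatrix_ne_zero {R ι : Type*} [CommRing R] [IsDomain R] [Fintype ι]
    [DecidableEq ι] {A : Matrix m n R} {r : ι → m} {c : ι → n} (h : (A.submatrix r c).det ≠ 0) :
    Fintype.card ι ≤ A.rank :=
  (Matrix.rank_of_det_ne_zero h).symm.trans_le (A.rank_submatrix_le r c)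

variable {K : Type*} [Field K]

theorem exists_linearIndependent_comp_of_finrank_span_eq {ι V : Type*} [AddCommGroup V]
    [Module K V] {v : ι → V} [Module.Finite K (Submodule.span K (range v))] {d : ℕ}
    (hd : finrank K (Submodule.span K (range v)) = d) :
    ∃ g : Fin d → ι, LinearIndependent K (v ∘ g) := by
  subst hd
  obtain ⟨w, hw, -, hli⟩ := Submodule.exists_fun_fin_finrank_span_eq K (range v)
  choose g hg using hw
  exact ⟨g, by rwa [show v ∘ g = w from funext hg]⟩

theorem exists_det_submatrix_ne_zero (A : Matrix m n K) :
    ∃ (r : Fin A.rank → m) (c : Fin A.rank → n), (A.submatrix r c).det ≠ 0 := by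
  have := Module.Finite.span_of_finite K (finite_range A.col)
  obtain ⟨c, hc⟩ :=
    exists_linearIndependent_comp_of_finrank_span_eq A.rank_eq_finrank_span_cols.symm
  have hspan : Submodule.span K (range (A.submatrix id c).row) = ⊤ :=
    span_flip_eq_top_iff_linearIndependent.2 hc
  have hdim : finrank K (Submodule.span K (range (A.submatrix id c).row)) = A.rank := by
    rw [hspan, finrank_top, finrank_fin_fun]
  obtain ⟨r, hr⟩ := exists_linearIndependent_comp_of_finrank_span_eq hdim
  have hunit : IsUnit (A.submatrix r c) := Matrix.linearIndependent_rows_iff_isUnit.1 hr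
  exact ⟨r, c, ((Matrix.isUnit_iff_isUnit_det _).1 hunit).ne_zero⟩

theorem lowerSemicontinuous_matrix_rank [TopologicalSpace K] [IsTopologicalRing K] [T1Space K] :
    LowerSemicontinuous (Matrix.rank : Matrix m n K → ℕ) := by
  intro A d hd
  obtain ⟨r, c, hdet⟩ := exists_det_submatrix_ne_zero A
  have hcont : Continuous fun B : Matrix m n K ↦ (B.submatrix r c).det :=
    (continuous_id.matrix_submatrix r c).matrix_det
  filter_upwards [hcont.continuousAt.eventually_ne hdet] with B hB
  have hrank : A.rank ≤ B.rank := by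
    simpa only [Fintype.card_fin] using card_le_rank_of_det_submatrix_ne_zero hB
  exact hd.trans_le hrank

end Minors

theorem stmt5_general {X K m n : Type*} [TopologicalSpace X] [Field K] [TopologicalSpace K]
    [IsTopologicalRing K] [T1Space K] [Fintype n] (A : X → Matrix m n K) (hA : Continuous A) :
    IsOpen {x | ∀ᶠ y in 𝓝 x, (A y).rank = (A x).rank} ∧
    Dense {x | ∀ᶠ y in 𝓝 x, (A y).rank = (A x).rank} := by
  have hfin : (range (Matrix.rank ∘ A)).Finite :=
    finite_range_matrix_rank.subset (range_comp_subset_range A Matrix.rank)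
  exact ⟨isOpen_setOfPred_eventually_eq_nhds _,
    dense_setOfPred_eventually_eq_nhds_of_lowerSemicontinuous hfin.wellFoundedOn
      (lowerSemicontinuous_matrix_rank.comp hA)⟩

theorem stmt5 {X : Type*} [TopologicalSpace X] {m k : ℕ}
    (A : X → Matrix (Fin m) (Fin k) ℝ) (hA : Continuous A) :
    IsOpen {x : X | ∃ N ∈ nhds x, ∀ y ∈ N, (A y).rank = (A x).rank} ∧
    Dense {x : X | ∃ N ∈ nhds x, ∀ y ∈ N, (A y).rank = (A x).rank} := by
  simpa only [eventually_iff_exists_mem] using stmt5_general A hA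
end

section
/- Let π be a smooth Poisson bivector field on ℝⁿ. Then its linearization πlin, defined by πlin (x, v) = Matrix.fromBlocks 0 (π x) (-(π x)ᵀ) (fun i j => fderiv ℝ (fun z => π z i j) x v) and viewed as a map (Fin n → ℝ) × (Fin n → ℝ) → Matrix (Fin n ⊕ Fin n) (Fin n ⊕ Fin n) ℝ, is itself a smooth Poisson bivector field on ℝⁿ × ℝⁿ: πlin (x,v) is skew-symmetric for every (x, v), and πlin satisfies the Jacobi identity, where partial derivatives are taken with respect to the 2n coordinates of (x, v) (indexed by Fin n ⊕ Fin n). -/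
open scoped Matrix

/-- The linearization of a bivector field `π` on `ℝⁿ` around the diagonal:
a bivector field on `ℝⁿ × ℝⁿ`, indexed by `Fin n ⊕ Fin n`. -/
noncomputable def pilin {n : ℕ} (π : (Fin n → ℝ) → Matrix (Fin n) (Fin n) ℝ)
    (p : (Fin n → ℝ) × (Fin n → ℝ)) : Matrix (Fin n ⊕ Fin n) (Fin n ⊕ Fin n) ℝ :=
  Matrix.fromBlocks 0 (π p.1) (-(π p.1)ᵀ)
    (Matrix.of fun i j => fderiv ℝ (fun z => π z i j) p.1 p.2)

/-- The standard basis vector of `(Fin n → ℝ) × (Fin n → ℝ)` indexed by `Fin n ⊕ Fin n`. -/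
noncomputable def basisVec {n : ℕ} (l : Fin n ⊕ Fin n) : (Fin n → ℝ) × (Fin n → ℝ) :=
  Sum.elim (fun i => (Pi.single i 1, 0)) (fun i => (0, Pi.single i 1)) l

/-!
Write `fᵛ = f ∘ Prod.fst` and `fᶜ (x, v) = Df(x) v` for the two lifts of a function `f` on `E` to
`E × E`. The linearization of a bivector field is its tangent lift, whose bracket obeys
`{fᵛ, gᵛ} = 0`, `{fᶜ, gᵛ} = {fᵛ, gᶜ} = {f, g}ᵛ` and `{fᶜ, gᶜ} = {f, g}ᶜ`; the last identity is the
product rule together with the symmetry of second derivatives. The entries of the linearization are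
`0` or lifts of entries of `π`, so each component of its Jacobiator is `0` or a lift of a component
of the Jacobiator of `π`.
-/

theorem apply_eq_neg_apply_of_transpose_eq_neg {ι R : Type*} [Neg R] {A : Matrix ι ι R}
    (hA : Aᵀ = -A) (i j : ι) : A i j = -A j i :=
  congrFun (congrFun hA j) i

theorem fderiv_comp_fst_apply {𝕜 E F G : Type*} [NontriviallyNormedField 𝕜]
    [NormedAddCommGroup E] [NormedSpace 𝕜 E] [NormedAddCommGroup F] [NormedSpace 𝕜 F]
    [NormedAddCommGroup G] [NormedSpace 𝕜 G] {f : E → G} {p : E × F}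
    (hf : DifferentiableAt 𝕜 f p.1) (w : E × F) :
    fderiv 𝕜 (fun q : E × F => f q.1) p w = fderiv 𝕜 f p.1 w.1 :=
  congrArg (· w) (hf.hasFDerivAt.comp p hasFDerivAt_fst).fderiv

section CompleteLift

variable {𝕜 E : Type*} [NontriviallyNormedField 𝕜] [NormedAddCommGroup E] [NormedSpace 𝕜 E]
  {f g : E → 𝕜} {p : E × E}

/-- The complete lift of a function `f` on `E` to the tangent bundle `E × E`: its differential
`(x, v) ↦ Df(x) v`, viewed as a function of both variables. -/
noncomputable def completeLift (f : E → 𝕜) (p : E × E) : 𝕜 :=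
  fderiv 𝕜 f p.1 p.2

theorem completeLift_add (hf : DifferentiableAt 𝕜 f p.1) (hg : DifferentiableAt 𝕜 g p.1) :
    completeLift (fun x => f x + g x) p = completeLift f p + completeLift g p := by
  simp only [completeLift, fderiv_fun_add hf hg, add_apply]

theorem completeLift_neg : completeLift (fun x => -f x) p = -completeLift f p := by
  simp only [completeLift, fderiv_fun_neg, neg_apply]

theorem contDiff_completeLift {m n : WithTop ℕ∞} (hf : ContDiff 𝕜 n f) (hmn : m + 1 ≤ n) :
    ContDiff 𝕜 m (completeLift f) :=
  ((hf.fderiv_right hmn).comp contDiff_fst).clm_apply contDiff_snd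

theorem fderiv_completeLift_apply (hf : DifferentiableAt 𝕜 (fderiv 𝕜 f) p.1) (w : E × E) :
    fderiv 𝕜 (completeLift f) p w = fderiv 𝕜 (fderiv 𝕜 f) p.1 w.1 p.2 + fderiv 𝕜 f p.1 w.2 := by
  have hlift : HasFDerivAt (completeLift f) _ p :=
    (hf.hasFDerivAt.comp p hasFDerivAt_fst).clm_apply hasFDerivAt_snd
  simp [hlift.fderiv, add_comm]

end CompleteLift

section Jacobiator

variable {𝕜 E ι : Type*} [NontriviallyNormedField 𝕜] [NormedAddCommGroup E] [NormedSpace 𝕜 E]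
  [Fintype ι] {e : ι → E} {π : E → Matrix ι ι 𝕜} {f : E → 𝕜} {x : E}

/-- The bracket `{f, xᵢ} = ∑ₗ πₗᵢ ∂ₗf` of a function `f` with the `i`-th coordinate, for the
bivector field with matrix `π` in the constant frame `e`; here `∂ₗ` is the derivative along `e l`.
-/
noncomputable def coordBracket (e : ι → E) (π : E → Matrix ι ι 𝕜) (i : ι) (f : E → 𝕜) (x : E) : 𝕜 :=
  ∑ l, π x l i * fderiv 𝕜 f x (e l)

/-- The Jacobiator of the bivector field with matrix `π` in the frame `e`: its vanishing is the
Jacobi identity. -/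
noncomputable def jacobiator (e : ι → E) (π : E → Matrix ι ι 𝕜) (i j k : ι) (x : E) : 𝕜 :=
  coordBracket e π i (fun z => π z j k) x + coordBracket e π j (fun z => π z k i) x
    + coordBracket e π k (fun z => π z i j) x

/-- A Poisson bivector field of class `C^n` on `E`, given by its matrix `π` in the constant frame
`e`. The frame may be any family of vectors: skewness and the Jacobi identity are conditions on the
matrix. -/
structure IsPoisson (n : WithTop ℕ∞) (e : ι → E) (π : E → Matrix ι ι 𝕜) : Prop where
  contDiff : ∀ i j, ContDiff 𝕜 n fun x => π x i j
  transpose_eq_neg : ∀ x, (π x)ᵀ = -π x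
  jacobi : ∀ i j k x, jacobiator e π i j k x = 0

theorem coordBracket_const (c : 𝕜) (i : ι) : coordBracket e π i (fun _ => c) x = 0 := by
  simp [coordBracket]

theorem differentiableAt_coordBracket {i : ι} (hπ : ∀ l, DifferentiableAt 𝕜 (fun z => π z l i) x)
    (hf : DifferentiableAt 𝕜 (fderiv 𝕜 f) x) : DifferentiableAt 𝕜 (coordBracket e π i f) x :=
  DifferentiableAt.fun_sum fun l _ =>
    (hπ l).fun_mul (hf.clm_apply (differentiableAt_const (e l)))

theorem completeLift_coordBracket {i : ι} {p : E × E}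
    (hπ : ∀ l, DifferentiableAt 𝕜 (fun z => π z l i) p.1)
    (hf : DifferentiableAt 𝕜 (fderiv 𝕜 f) p.1) :
    completeLift (coordBracket e π i f) p =
      ∑ l, (π p.1 l i * fderiv 𝕜 (fderiv 𝕜 f) p.1 p.2 (e l)
        + completeLift (fun z => π z l i) p * fderiv 𝕜 f p.1 (e l)) := by
  have hderiv : HasFDerivAt (coordBracket e π i f) _ p.1 :=
    HasFDerivAt.fun_sum fun l _ =>
      (hπ l).hasFDerivAt.fun_mul (hf.hasFDerivAt.clm_apply (hasFDerivAt_const (e l) p.1))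
  simp [completeLift, hderiv.fderiv, mul_comm]

theorem jacobiator_rotate (i j k : ι) : jacobiator e π i j k x = jacobiator e π j k i x := by
  simp only [jacobiator]
  ring

theorem jacobiator_eq_sum (i j k : ι) :
    jacobiator e π i j k x =
      ∑ l, (π x l i * fderiv 𝕜 (fun z => π z j k) x (e l)
        + π x l j * fderiv 𝕜 (fun z => π z k i) x (e l)
        + π x l k * fderiv 𝕜 (fun z => π z i j) x (e l)) := by
  simp only [jacobiator, coordBracket, Finset.sum_add_distrib]

end Jacobiator

section Linearization

variable {𝕜 E ι : Type*} [NontriviallyNormedField 𝕜] [NormedAddCommGroup E] [NormedSpace 𝕜 E]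
  {e : ι → E} {π : E → Matrix ι ι 𝕜} {f : E → 𝕜} {p : E × E}

/-- The linearization around the diagonal of the bivector field with matrix `π`, as a matrix in
`doubledFrame`; over `ℝⁿ` with its standard basis it is `pilin`. -/
noncomputable def linearization (π : E → Matrix ι ι 𝕜) (p : E × E) : Matrix (ι ⊕ ι) (ι ⊕ ι) 𝕜 :=
  Matrix.fromBlocks 0 (π p.1) (-(π p.1)ᵀ) (Matrix.of fun i j => completeLift (fun z => π z i j) p)

/-- The frame of `E × E` induced by a frame `e` of `E`, with the base directions indexed by
`Sum.inl` and the fibre directions by `Sum.inr`; over `ℝⁿ` with its standard basis it is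
`basisVec`. -/
def doubledFrame (e : ι → E) : ι ⊕ ι → E × E :=
  Sum.elim (fun i => (e i, 0)) (fun i => (0, e i))

theorem linearization_inl_inl (i j : ι) : linearization π p (.inl i) (.inl j) = 0 :=
  rfl

theorem linearization_inl_inr (i j : ι) : linearization π p (.inl i) (.inr j) = π p.1 i j :=
  rfl

theorem linearization_inr_inl (hskew : (π p.1)ᵀ = -π p.1) (i j : ι) :
    linearization π p (.inr i) (.inl j) = π p.1 i j :=
  (apply_eq_neg_apply_of_transpose_eq_neg hskew i j).symm

theorem linearization_inr_inr (i j : ι) :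
    linearization π p (.inr i) (.inr j) = completeLift (fun z => π z i j) p :=
  rfl

theorem contDiff_linearization {m n : WithTop ℕ∞} (hπ : ∀ i j, ContDiff 𝕜 n fun x => π x i j)
    (hmn : m + 1 ≤ n) : ∀ a b, ContDiff 𝕜 m fun q => linearization π q a b := by
  have hlift (i j : ι) : ContDiff 𝕜 m fun p : E × E => π p.1 i j :=
    ((hπ i j).of_le (le_self_add.trans hmn)).comp contDiff_fst
  rintro (i | i) (j | j)
  · exact contDiff_const
  · exact hlift i j
  · exact (hlift j i).neg
  · exact contDiff_completeLift (hπ i j) hmn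

theorem transpose_linearization (hskew : ∀ x, (π x)ᵀ = -π x) :
    (linearization π p)ᵀ = -linearization π p := by
  have hlift : (Matrix.of fun i j => completeLift (fun z => π z i j) p)ᵀ =
      -Matrix.of fun i j => completeLift (fun z => π z i j) p := by
    ext i j
    simp only [Matrix.transpose_apply, Matrix.neg_apply, Matrix.of_apply, ← completeLift_neg,
      ← apply_eq_neg_apply_of_transpose_eq_neg (hskew _)]
  simp only [linearization, Matrix.fromBlocks_transpose, Matrix.fromBlocks_neg, hlift,
    Matrix.transpose_zero, Matrix.transpose_neg, Matrix.transpose_transpose, neg_zero, neg_neg]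

variable [Fintype ι]

theorem coordBracket_linearization_inl (F : E × E → 𝕜) (i : ι) :
    coordBracket (doubledFrame e) (linearization π) (.inl i) F p =
      ∑ l, -π p.1 i l * fderiv 𝕜 F p (0, e l) := by
  simp [coordBracket, linearization, doubledFrame]

theorem coordBracket_linearization_inr (F : E × E → 𝕜) (i : ι) :
    coordBracket (doubledFrame e) (linearization π) (.inr i) F p =
      ∑ l, (π p.1 l i * fderiv 𝕜 F p (e l, 0)
        + completeLift (fun z => π z l i) p * fderiv 𝕜 F p (0, e l)) := by
  simp [coordBracket, linearization, doubledFrame, Finset.sum_add_distrib]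

theorem coordBracket_linearization_inl_comp_fst (hf : DifferentiableAt 𝕜 f p.1) (i : ι) :
    coordBracket (doubledFrame e) (linearization π) (.inl i) (fun q => f q.1) p = 0 := by
  simp [coordBracket_linearization_inl, fderiv_comp_fst_apply hf]

theorem coordBracket_linearization_inl_completeLift (hskew : (π p.1)ᵀ = -π p.1)
    (hf : DifferentiableAt 𝕜 (fderiv 𝕜 f) p.1) (i : ι) :
    coordBracket (doubledFrame e) (linearization π) (.inl i) (completeLift f) p =
      coordBracket e π i f p.1 := by
  rw [coordBracket_linearization_inl, coordBracket]
  simp [fderiv_completeLift_apply hf, apply_eq_neg_apply_of_transpose_eq_neg hskew _ i]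

theorem coordBracket_linearization_inr_comp_fst (hf : DifferentiableAt 𝕜 f p.1) (i : ι) :
    coordBracket (doubledFrame e) (linearization π) (.inr i) (fun q => f q.1) p =
      coordBracket e π i f p.1 := by
  rw [coordBracket_linearization_inr, coordBracket]
  simp [fderiv_comp_fst_apply hf]

theorem coordBracket_linearization_inr_completeLift {i : ι}
    (hπ : ∀ l, DifferentiableAt 𝕜 (fun z => π z l i) p.1)
    (hf : DifferentiableAt 𝕜 (fderiv 𝕜 f) p.1) (hsymm : IsSymmSndFDerivAt 𝕜 f p.1) :
    coordBracket (doubledFrame e) (linearization π) (.inr i) (completeLift f) p =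
      completeLift (coordBracket e π i f) p := by
  simp [coordBracket_linearization_inr, completeLift_coordBracket hπ hf,
    fderiv_completeLift_apply hf, hsymm.eq p.2]

theorem jacobiator_linearization_inl_inl (hskew : ∀ x, (π x)ᵀ = -π x)
    (hπ : ∀ i j, DifferentiableAt 𝕜 (fun x => π x i j) p.1) (i j : ι) (c : ι ⊕ ι) :
    jacobiator (doubledFrame e) (linearization π) (.inl i) (.inl j) c p = 0 := by
  cases c with
  | inl k => simp only [jacobiator, linearization_inl_inl, coordBracket_const, add_zero]
  | inr k =>
    simp only [jacobiator, linearization_inl_inl, linearization_inl_inr,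
      linearization_inr_inl (hskew _), coordBracket_const,
      coordBracket_linearization_inl_comp_fst (hπ _ _), add_zero]

theorem jacobiator_linearization_inl_inr_inr (hskew : ∀ x, (π x)ᵀ = -π x)
    (hπ : ∀ i j, DifferentiableAt 𝕜 (fun x => π x i j) p.1)
    (hπ' : ∀ i j, DifferentiableAt 𝕜 (fderiv 𝕜 fun x => π x i j) p.1) (i j k : ι) :
    jacobiator (doubledFrame e) (linearization π) (.inl i) (.inr j) (.inr k) p =
      jacobiator e π i j k p.1 := by
  simp only [jacobiator, linearization_inl_inr, linearization_inr_inl (hskew _),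
    linearization_inr_inr, coordBracket_linearization_inr_comp_fst (hπ _ _),
    coordBracket_linearization_inl_completeLift (hskew _) (hπ' _ _)]

theorem jacobiator_linearization_inr_inr_inr
    (hπ : ∀ i j, DifferentiableAt 𝕜 (fun x => π x i j) p.1)
    (hπ' : ∀ i j, DifferentiableAt 𝕜 (fderiv 𝕜 fun x => π x i j) p.1)
    (hsymm : ∀ i j, IsSymmSndFDerivAt 𝕜 (fun x => π x i j) p.1) (i j k : ι) :
    jacobiator (doubledFrame e) (linearization π) (.inr i) (.inr j) (.inr k) p =
      completeLift (jacobiator e π i j k) p := by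
  have hbracket (a b c : ι) : DifferentiableAt 𝕜 (coordBracket e π a fun x => π x b c) p.1 :=
    differentiableAt_coordBracket (hπ · a) (hπ' b c)
  have hlift (a b c : ι) :
      coordBracket (doubledFrame e) (linearization π) (.inr a)
          (fun q => linearization π q (.inr b) (.inr c)) p =
        completeLift (coordBracket e π a fun x => π x b c) p :=
    coordBracket_linearization_inr_completeLift (hπ · a) (hπ' b c) (hsymm b c)
  calc
    _ = completeLift (coordBracket e π i fun x => π x j k) p
          + completeLift (coordBracket e π j fun x => π x k i) p
          + completeLift (coordBracket e π k fun x => π x i j) p := by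
        simp only [jacobiator, hlift]
    _ = completeLift (jacobiator e π i j k) p := by
        rw [← completeLift_add (hbracket i j k) (hbracket j k i),
          ← completeLift_add ((hbracket i j k).fun_add (hbracket j k i)) (hbracket k i j)]
        rfl

theorem jacobiator_linearization_eq_zero {n : WithTop ℕ∞} (hn : minSmoothness 𝕜 2 ≤ n)
    (h : IsPoisson n e π) (a b c : ι ⊕ ι) (p : E × E) :
    jacobiator (doubledFrame e) (linearization π) a b c p = 0 := by
  have htwo : 1 + 1 ≤ n := one_add_one_eq_two.trans_le (le_minSmoothness.trans hn)
  have hdiff (i j : ι) : DifferentiableAt 𝕜 (fun x => π x i j) p.1 :=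
    (h.contDiff i j).contDiffAt.differentiableAt
      (zero_lt_one.trans_le (le_self_add.trans htwo)).ne'
  have hdiff' (i j : ι) : DifferentiableAt 𝕜 (fderiv 𝕜 fun x => π x i j) p.1 :=
    ((h.contDiff i j).fderiv_right htwo).differentiable_one p.1
  have hsymm (i j : ι) : IsSymmSndFDerivAt 𝕜 (fun x => π x i j) p.1 :=
    (h.contDiff i j).contDiffAt.isSymmSndFDerivAt hn
  have hll := jacobiator_linearization_inl_inl (e := e) h.transpose_eq_neg hdiff
  have hlrr (i j k : ι) :
      jacobiator (doubledFrame e) (linearization π) (.inl i) (.inr j) (.inr k) p = 0 :=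
    (jacobiator_linearization_inl_inr_inr h.transpose_eq_neg hdiff hdiff' i j k).trans
      (h.jacobi i j k p.1)
  have hrrr (i j k : ι) :
      jacobiator (doubledFrame e) (linearization π) (.inr i) (.inr j) (.inr k) p = 0 := by
    rw [jacobiator_linearization_inr_inr_inr hdiff hdiff' hsymm, funext (h.jacobi i j k)]
    simp [completeLift]
  rcases a with i | i <;> rcases b with j | j <;> rcases c with k | k
  · exact hll i j _
  · exact hll i j _
  · rw [← jacobiator_rotate]
    exact hll k i _
  · exact hlrr i j k
  · rw [jacobiator_rotate]
    exact hll j k _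
  · rw [jacobiator_rotate]
    exact hlrr j k i
  · rw [← jacobiator_rotate]
    exact hlrr k i j
  · exact hrrr i j k

theorem stmt10_general {m n : WithTop ℕ∞} (hmn : m + 1 ≤ n) (hn : minSmoothness 𝕜 2 ≤ n)
    (h : IsPoisson n e π) : IsPoisson m (doubledFrame e) (linearization π) where
  contDiff := contDiff_linearization h.contDiff hmn
  transpose_eq_neg _ := transpose_linearization h.transpose_eq_neg
  jacobi := jacobiator_linearization_eq_zero hn h

end Linearization

theorem stmt10 {n : ℕ} (π : (Fin n → ℝ) → Matrix (Fin n) (Fin n) ℝ)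
    (hsmooth : ∀ i j, ContDiff ℝ (⊤ : ℕ∞) fun x => π x i j)
    (hskew : ∀ x, (π x)ᵀ = -(π x))
    (hjac : ∀ (x : Fin n → ℝ) (i j k : Fin n),
      ∑ l, (π x l i * fderiv ℝ (fun z => π z j k) x (Pi.single l 1)
        + π x l j * fderiv ℝ (fun z => π z k i) x (Pi.single l 1)
        + π x l k * fderiv ℝ (fun z => π z i j) x (Pi.single l 1)) = 0) :
    (∀ i j, ContDiff ℝ (⊤ : ℕ∞) fun p => pilin π p i j) ∧
    (∀ p, (pilin π p)ᵀ = -(pilin π p)) ∧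
    (∀ (p : (Fin n → ℝ) × (Fin n → ℝ)) (i j k : Fin n ⊕ Fin n),
      ∑ l, (pilin π p l i * fderiv ℝ (fun q => pilin π q j k) p (basisVec l)
        + pilin π p l j * fderiv ℝ (fun q => pilin π q k i) p (basisVec l)
        + pilin π p l k * fderiv ℝ (fun q => pilin π q i j) p (basisVec l)) = 0) := by
  have htwo : minSmoothness ℝ 2 ≤ (⊤ : ℕ∞) :=
    minSmoothness_of_isRCLikeNormedField.trans_le (WithTop.coe_le_coe.2 (le_top : (2 : ℕ∞) ≤ ⊤))
  have h : IsPoisson (⊤ : ℕ∞) (doubledFrame fun l => Pi.single l 1) (linearization π) :=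
    stmt10_general (by simp) htwo
      ⟨hsmooth, hskew, fun i j k x => (jacobiator_eq_sum i j k).trans (hjac x i j k)⟩
  exact ⟨h.contDiff, h.transpose_eq_neg,
    fun p i j k => (jacobiator_eq_sum i j k).symm.trans (h.jacobi i j k p)⟩
end

section
/- Let π be a smooth Poisson bivector field on ℝⁿ, with product structure Π (x, y) = Matrix.fromBlocks (π x) 0 0 (-(π y)) on ℝⁿ × ℝⁿ and linearization πlin (x, v) = Matrix.fromBlocks 0 (π x) (-(π x)ᵀ) (fun i j => fderiv ℝ (fun z => π z i j) x v). Suppose there exist open sets W₁, W₂ ⊆ (Fin n → ℝ) × (Fin n → ℝ) with (x, 0) ∈ W₁ for every x, and smooth maps φ, ψ : (Fin n → ℝ) × (Fin n → ℝ) → (Fin n → ℝ) × (Fin n → ℝ) such that ψ ∘ φ agrees with the identity on W₁, φ ∘ ψ agrees with the identity on W₂, φ '' W₁ = W₂, φ (x, 0) = (x, x) for every x, and φ is a Poisson map from πlin to Π on W₁, i.e. for every p ∈ W₁, J p * πlin p * (J p)ᵀ = Π (φ p), where J p ∈ Matrix (Fin n ⊕ Fin n) (Fin n ⊕ Fin n)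 ℝ is the matrix of fderiv ℝ φ p under the identification (Fin n → ℝ) × (Fin n → ℝ) ≅ (Fin n ⊕ Fin n → ℝ). Then π is regular: the function x ↦ (π x).rank is locally constant on ℝⁿ. -/
open scoped Matrix

/-- The product Poisson structure `π × (-π)` on `ℝⁿ × ℝⁿ`. -/
noncomputable def Pprod {n : ℕ} (π : (Fin n → ℝ) → Matrix (Fin n) (Fin n) ℝ)
    (p : (Fin n → ℝ) × (Fin n → ℝ)) : Matrix (Fin n ⊕ Fin n) (Fin n ⊕ Fin n) ℝ :=
  Matrix.fromBlocks (π p.1) 0 0 (-(π p.2))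

/-- The Jacobian matrix of a map `φ : ℝⁿ × ℝⁿ → ℝⁿ × ℝⁿ` at `p`, under the identification
`(Fin n → ℝ) × (Fin n → ℝ) ≅ (Fin n ⊕ Fin n → ℝ)`. -/
noncomputable def Jmat {n : ℕ}
    (φ : (Fin n → ℝ) × (Fin n → ℝ) → (Fin n → ℝ) × (Fin n → ℝ))
    (p : (Fin n → ℝ) × (Fin n → ℝ)) : Matrix (Fin n ⊕ Fin n) (Fin n ⊕ Fin n) ℝ :=
  Matrix.of fun l m =>
    Sum.elim (fun i => (fderiv ℝ φ p (basisVec m)).1 i)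
      (fun i => (fderiv ℝ φ p (basisVec m)).2 i) l

/-!
Write the Jacobian of `φ` along the zero section in block form. Its first column is forced by
`φ (x, 0) = (x, x)`; let `A` and `B` be the fibre derivatives of the two components of `φ`. Along
the zero section the Poisson equation reads `A π + π Aᵀ = π`, `A π + π Bᵀ = 0`, `B π + π Aᵀ = 0`.

Work modulo the matrix fields `E π + π F` with `E`, `F` continuous. Differentiating the three
relations in a direction `w` gives the same relations for `Q = ∂_w π` modulo this subgroup, and
differentiating the off-diagonal blocks of the Poisson equation along the fibres gives
`A Q Bᵀ ≡ 0` and `B Q Aᵀ ≡ 0`. Hence left multiplication by `A` and right multiplication by `Aᵀ`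
commute, each squares to zero on `Q`, and their sum fixes `Q`; so `Q ≡ 0`.

Thus `π' = E π + π F` along every line, and a solution of this linear equation has the form
`t ↦ g t * π₀ * h t` with `g`, `h` invertible, so it has constant rank.
-/

open Filter Metric Set Topology
open scoped Matrix.Norms.Operator

section Algebra

theorem mem_of_map_map_mem_of_add_sub_mem {M : Type*} [AddCommGroup M] {S : AddSubgroup M}
    {f g : M →+ M} {q : M} (hfS : ∀ x ∈ S, f x ∈ S) (hgS : ∀ x ∈ S, g x ∈ S)
    (hfg : f (g q) = g (f q)) (hf : f (f q) ∈ S) (hg : g (g q) ∈ S) (h : f q + g q - q ∈ S) :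
    q ∈ S := by
  -- Applying `f` and `g` to `f q + g q ≡ q` gives `2 f q ≡ q`, hence `f q ≡ 2 f (f q) ≡ 0`.
  have hsub : f q + f q - q ∈ S := by
    have := S.sub_mem (S.add_mem (S.add_mem (S.sub_mem h (hfS _ h)) (hgS _ h)) hf) hg
    simp only [map_add, map_sub, hfg] at this
    convert this using 1
    abel
  have hfq : f q ∈ S := by
    have := S.sub_mem (S.add_mem hf hf) (hfS _ hsub)
    simpa using this
  simpa using S.sub_mem (S.add_mem hfq hfq) hsub

variable {R : Type*} [Ring R] {C : Subring R} {a a' b b' p q : R}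

/-- The elements `e * p + p * f` with `e`, `f` in the subring `C`: the formal tangent space at `p`
to the orbit of `p` under left and right multiplication by units of `C`. When the ambient ring is
`V → Matrix m m ℝ` and `C` consists of the continuous matrix fields, it measures the failure of a
derivative of `p` to come from an infinitesimal change of frames. -/
def orbitTangent (C : Subring R) (p : R) : AddSubgroup R :=
  C.toAddSubgroup.map (AddMonoidHom.mulRight p) ⊔ C.toAddSubgroup.map (AddMonoidHom.mulLeft p)

theorem mem_orbitTangent : q ∈ orbitTangent C p ↔ ∃ e ∈ C, ∃ f ∈ C, e * p + p * f = q := by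
  simp [orbitTangent, AddSubgroup.mem_sup]

theorem mul_left_mem_orbitTangent (ha : a ∈ C) (hb : b ∈ C) (h : a * p + p * b = 0)
    (hq : q ∈ orbitTangent C p) : a * q ∈ orbitTangent C p := by
  obtain ⟨e, he, f, hf, rfl⟩ := mem_orbitTangent.1 hq
  refine mem_orbitTangent.2
    ⟨a * e, C.mul_mem ha he, -(b * f), C.neg_mem (C.mul_mem hb hf), ?_⟩
  rw [mul_add, ← mul_assoc a p, eq_neg_of_add_eq_zero_left h]
  noncomm_ring

theorem mul_right_mem_orbitTangent (ha : a ∈ C) (hb : b ∈ C) (h : a * p + p * b = 0)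
    (hq : q ∈ orbitTangent C p) : q * b ∈ orbitTangent C p := by
  obtain ⟨e, he, f, hf, rfl⟩ := mem_orbitTangent.1 hq
  refine mem_orbitTangent.2
    ⟨-(e * a), C.neg_mem (C.mul_mem he ha), f * b, C.mul_mem hf hb, ?_⟩
  rw [add_mul, mul_assoc e p, eq_neg_of_add_eq_zero_right h]
  noncomm_ring

theorem mem_orbitTangent_of_sylvester (ha : a ∈ C) (ha' : a' ∈ C) (hb : b ∈ C) (hb' : b' ∈ C)
    (hab' : a * p + p * b' = 0) (hba' : b * p + p * a' = 0)
    (h₁₁ : (a - 1) * q + q * a' ∈ orbitTangent C p)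
    (h₁₂ : a * q + q * b' ∈ orbitTangent C p) (h₂₁ : b * q + q * a' ∈ orbitTangent C p)
    (h₁₂' : a * q * b' ∈ orbitTangent C p) (h₂₁' : b * q * a' ∈ orbitTangent C p) :
    q ∈ orbitTangent C p := by
  have stable_left : ∀ x ∈ orbitTangent C p, a * x ∈ orbitTangent C p :=
    fun _ => mul_left_mem_orbitTangent ha hb' hab'
  have stable_right : ∀ x ∈ orbitTangent C p, x * a' ∈ orbitTangent C p :=
    fun _ => mul_right_mem_orbitTangent hb ha' hba'
  have sq_left : a * (a * q) ∈ orbitTangent C p := by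
    have := sub_mem (stable_left _ h₁₂) h₁₂'
    rwa [mul_add, ← mul_assoc a q, add_sub_cancel_right] at this
  have sq_right : q * a' * a' ∈ orbitTangent C p := by
    have := sub_mem (stable_right _ h₂₁) h₂₁'
    rwa [add_mul, add_sub_cancel_left] at this
  rw [sub_mul, one_mul, sub_add_eq_add_sub] at h₁₁
  exact mem_of_map_map_mem_of_add_sub_mem (f := .mulLeft a) (g := .mulRight a')
    stable_left stable_right (mul_assoc a q a').symm sq_left sq_right h₁₁

end Algebra

section ODE

theorem exists_eventually_hasDerivAt_linear {X : Type*} [NormedAddCommGroup X] [NormedSpace ℝ X]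
    [CompleteSpace X] {A : ℝ → X →L[ℝ] X} (hA : Continuous A) (t₀ : ℝ) (x₀ : X) :
    ∃ α : ℝ → X, α t₀ = x₀ ∧ ∀ᶠ t in 𝓝 t₀, HasDerivAt α (A t (α t)) t := by
  obtain ⟨K, hK⟩ : ∃ K, ∀ t ∈ Icc (t₀ - 1) (t₀ + 1), ‖A t‖₊ ≤ K := by
    obtain ⟨K, hK⟩ := isCompact_Icc.bddAbove_image hA.nnnorm.continuousOn
    exact ⟨K, fun t ht => hK (mem_image_of_mem _ ht)⟩
  set L : NNReal := K * (‖x₀‖₊ + 1)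
  obtain ⟨ε, hε, hε1, hLε⟩ : ∃ ε > (0:ℝ), ε ≤ 1 ∧ L * ε ≤ 1 := by
    refine ⟨1 / (L + 1), by positivity, ?_, ?_⟩
    · rw [div_le_one (by positivity)]; simp
    · rw [mul_one_div, div_le_one (by positivity)]; simp
  have hsub : Icc (t₀ - ε) (t₀ + ε) ⊆ Icc (t₀ - 1) (t₀ + 1) :=
    Icc_subset_Icc (by linarith) (by linarith)
  have hPL : IsPicardLindelof (fun t => A t) (tmin := t₀ - ε) (tmax := t₀ + ε)
      ⟨t₀, by constructor <;> linarith⟩ x₀ 1 0 L K :=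
    { lipschitzOnWith t ht := ((A t).lipschitz.weaken (hK t (hsub ht))).lipschitzOnWith
      continuousOn x _ := by fun_prop
      norm_le t ht x hx := by
        have hx : ‖x‖ ≤ ‖x₀‖ + 1 := by simpa using norm_le_of_mem_closedBall hx
        exact (A t).le_of_opNorm_le_of_le (hK t (hsub ht)) hx
      mul_max_le := by simpa using hLε }
  obtain ⟨α, hα₀, hα⟩ := hPL.exists_eq_forall_mem_Icc_hasDerivWithinAt₀
  refine ⟨α, hα₀, ?_⟩
  filter_upwards [Ioo_mem_nhds (sub_lt_self t₀ hε) (lt_add_of_pos_right t₀ hε)] with t ht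
  exact (hα t (Ioo_subset_Icc_self ht)).hasDerivAt (Icc_mem_nhds ht.1 ht.2)

theorem eventually_eq_of_eventually_hasDerivAt_zero {X : Type*} [NormedAddCommGroup X]
    [NormedSpace ℝ X] {f : ℝ → X} {t₀ : ℝ} (hf : ∀ᶠ t in 𝓝 t₀, HasDerivAt f 0 t) :
    ∀ᶠ t in 𝓝 t₀, f t = f t₀ := by
  obtain ⟨ε, hε, hball⟩ := eventually_nhds_iff_ball.1 hf
  filter_upwards [ball_mem_nhds t₀ hε] with t ht
  exact isOpen_ball.is_const_of_deriv_eq_zero (convex_ball t₀ ε).isPreconnected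
    (fun s hs => (hball s hs).differentiableAt.differentiableWithinAt)
    (fun s hs => (hball s hs).deriv) ht (mem_ball_self hε)

theorem eventually_eq_units_mul_mul_units {𝔸 : Type*} [NormedRing 𝔸] [NormedAlgebra ℝ 𝔸]
    [CompleteSpace 𝔸] {X E F : ℝ → 𝔸} (hE : Continuous E) (hF : Continuous F)
    (hX : ∀ t, HasDerivAt X (E t * X t + X t * F t) t) (t₀ : ℝ) :
    ∀ᶠ t in 𝓝 t₀, ∃ u v : 𝔸ˣ, u * X t * v = X t₀ := by
  obtain ⟨g, hg₀, hg⟩ := exists_eventually_hasDerivAt_linear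
    (A := fun t => -(ContinuousLinearMap.mul ℝ 𝔸).flip (E t)) (by fun_prop) t₀ 1
  obtain ⟨h, hh₀, hh⟩ := exists_eventually_hasDerivAt_linear
    (A := fun t => -ContinuousLinearMap.mul ℝ 𝔸 (F t)) (by fun_prop) t₀ 1
  have hconst : ∀ᶠ t in 𝓝 t₀, g t * X t * h t = g t₀ * X t₀ * h t₀ := by
    refine eventually_eq_of_eventually_hasDerivAt_zero (f := fun t => g t * X t * h t) ?_
    filter_upwards [hg, hh] with t hgt hht
    refine ((hgt.mul (hX t)).mul hht).congr_deriv ?_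
    simp only [neg_apply, ContinuousLinearMap.flip_apply, ContinuousLinearMap.mul_apply',
      Pi.mul_apply]
    noncomm_ring
  have hunit : ∀ {f : ℝ → 𝔸}, f t₀ = 1 → ContinuousAt f t₀ → ∀ᶠ t in 𝓝 t₀, IsUnit (f t) :=
    fun h₁ hf => hf.eventually_mem (Units.isOpen.mem_nhds (by simp [h₁]))
  filter_upwards [hconst, hunit hg₀ hg.self_of_nhds.continuousAt,
    hunit hh₀ hh.self_of_nhds.continuousAt] with t ht ⟨u, hu⟩ ⟨v, hv⟩
  exact ⟨u, v, by simpa [hu, hv, hg₀, hh₀] using ht⟩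

end ODE

section Rank

variable {m : Type*} [Fintype m]

theorem rank_eq_of_hasDerivAt {X E F : ℝ → Matrix m m ℝ} (hE : Continuous E) (hF : Continuous F)
    (hX : ∀ t, HasDerivAt X (E t * X t + X t * F t) t) (s t : ℝ) : (X s).rank = (X t).rank := by
  classical
  have hloc : IsLocallyConstant fun t => (X t).rank := by
    refine (IsLocallyConstant.iff_eventually_eq _).2 fun t₀ => ?_
    filter_upwards [eventually_eq_units_mul_mul_units hE hF hX t₀] with t ⟨u, v, huv⟩
    rw [← huv, Matrix.rank_mul_eq_left_of_isUnit_det _ _ (Matrix.isUnits_det_units v),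
      Matrix.rank_mul_eq_right_of_isUnit_det _ _ (Matrix.isUnits_det_units u)]
  exact hloc.apply_eq_of_preconnectedSpace s t

theorem rank_eq_of_fderiv_mem_orbitTangent [DecidableEq m] {V : Type*} [NormedAddCommGroup V]
    [NormedSpace ℝ V] {P : V → Matrix m m ℝ} (hP : Differentiable ℝ P)
    (h : ∀ w, (fun x => fderiv ℝ P x w) ∈ orbitTangent (continuousSubring V (Matrix m m ℝ)) P)
    (x y : V) : (P x).rank = (P y).rank := by
  obtain ⟨E, hE, F, hF, hEF⟩ := mem_orbitTangent.1 (h (y - x))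
  have hline (t : ℝ) : HasDerivAt (fun t : ℝ => x + t • (y - x)) (y - x) t := by
    simpa using ((hasDerivAt_id t).smul_const (y - x)).const_add x
  have hcont : Continuous fun t : ℝ => x + t • (y - x) := by fun_prop
  have := rank_eq_of_hasDerivAt (X := fun t : ℝ => P (x + t • (y - x))) (hE.comp hcont)
    (hF.comp hcont) (fun t => by
      refine ((hP _).hasFDerivAt.comp_hasDerivAt t (hline t)).congr_deriv ?_
      exact (congrFun hEF _).symm) 0 1
  simpa using this

end Rank

section Calculus

variable {V 𝔸 : Type*} [NormedAddCommGroup V] [NormedSpace ℝ V] [NormedRing 𝔸] [NormedAlgebra ℝ 𝔸]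

theorem mul_fderiv_add_fderiv_mul_mem_orbitTangent {P a b : V → 𝔸} (hP : Differentiable ℝ P)
    (ha : ContDiff ℝ 1 a) (hb : ContDiff ℝ 1 b) (h : ∀ x, a x * P x + P x * b x = 0) (w : V) :
    (fun x => a x * fderiv ℝ P x w + fderiv ℝ P x w * b x) ∈
      orbitTangent (continuousSubring V 𝔸) P := by
  have ha' : Continuous fun x => fderiv ℝ a x w := by fun_prop (disch := norm_num)
  have hb' : Continuous fun x => fderiv ℝ b x w := by fun_prop (disch := norm_num)
  refine mem_orbitTangent.2 ⟨_, ha'.neg, _, hb'.neg, funext fun x => ?_⟩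
  have leibniz := ((ha.differentiable one_ne_zero x).hasFDerivAt.mul' (hP x).hasFDerivAt).add
    ((hP x).hasFDerivAt.mul' (hb.differentiable one_ne_zero x).hasFDerivAt)
  have hconst : a * P + P * b = fun _ => 0 := funext h
  rw [hconst] at leibniz
  have hzero : a x * fderiv ℝ P x w + fderiv ℝ a x w * P x +
      (P x * fderiv ℝ b x w + fderiv ℝ P x w * b x) = 0 :=
    congrArg (fun T => T w) (leibniz.unique (hasFDerivAt_const 0 x))
  simp only [Pi.add_apply, Pi.mul_apply, Pi.neg_apply]
  linear_combination (norm := noncomm_ring) -hzero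

theorem mul_apply_mul_mem_orbitTangent {P : V → 𝔸} {L : V → V →L[ℝ] 𝔸} {a A b B : V × V → 𝔸}
    (ha : ContDiff ℝ 1 a) (hA : ContDiff ℝ 1 A) (hb : ContDiff ℝ 1 b) (hB : ContDiff ℝ 1 B)
    (ha₁ : ∀ x, a (x, 0) = 1) (hb₁ : ∀ x, b (x, 0) = 1)
    (h : ∀ x, ∀ᶠ p : V × V in 𝓝 (x, 0),
      A p * P p.1 * b p + a p * P p.1 * B p + A p * L p.1 p.2 * B p = 0) (w : V) :
    (fun x => A (x, 0) * L x w * B (x, 0)) ∈ orbitTangent (continuousSubring V 𝔸) P := by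
  have hcont {f : V × V → 𝔸} (hf : ContDiff ℝ 1 f) :
      Continuous fun x => fderiv ℝ f (x, 0) (0, w) := by fun_prop (disch := norm_num)
  have hA₀ : Continuous fun x => A (x, 0) := by fun_prop
  have hB₀ : Continuous fun x => B (x, 0) := by fun_prop
  refine mem_orbitTangent.2 ⟨_, ((hcont ha).mul hA₀).sub (hcont hA),
    _, (hB₀.mul (hcont hb)).sub (hcont hB), funext fun x => ?_⟩
  have hderiv {f : V × V → 𝔸} (hf : ContDiff ℝ 1 f) :
      HasDerivAt (fun s : ℝ => f (x, s • w)) (fderiv ℝ f (x, 0) (0, w)) 0 := by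
    simpa [HasLineDerivAt] using
      (hf.differentiable one_ne_zero (x, 0)).hasFDerivAt.hasLineDerivAt (0, w)
  have hL : HasDerivAt (fun s : ℝ => L x (s • w)) (L x w) 0 := by
    simpa using (hasDerivAt_id (0 : ℝ)).smul_const (L x w)
  have leibniz := ((((hderiv hA).mul_const (P x)).mul (hderiv hb)).add
    (((hderiv ha).mul_const (P x)).mul (hderiv hB))).add (((hderiv hA).mul hL).mul (hderiv hB))
  have hline : Tendsto (fun s : ℝ => (x, s • w)) (𝓝 0) (𝓝 (x, 0)) :=
    Continuous.tendsto' (by fun_prop) _ _ (by simp)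
  have hzero := leibniz.unique
    ((hasDerivAt_const (0 : ℝ) (0 : 𝔸)).congr_of_eventuallyEq (hline.eventually (h x)))
  have hbase := (h x).self_of_nhds
  simp only [zero_smul, hb₁, mul_one, ha₁, one_mul, map_zero, mul_zero, zero_add, Pi.mul_apply,
    zero_mul, add_zero] at hzero
  simp only [hb₁, mul_one, ha₁, one_mul, map_zero, mul_zero, zero_mul, add_zero] at hbase
  simp only [Pi.add_apply, Pi.mul_apply, Pi.sub_apply]
  linear_combination (norm := noncomm_ring) fderiv ℝ a (x, 0) (0, w) * hbase +
    hbase * fderiv ℝ b (x, 0) (0, w) - hzero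

end Calculus

section Matrix

open Matrix

variable {m n : Type*} [Fintype m] [Fintype n]

theorem contDiff_matrix {V : Type*} [NormedAddCommGroup V] [NormedSpace ℝ V]
    {M : V → Matrix m n ℝ} {k : WithTop ℕ∞} (hM : ∀ i j, ContDiff ℝ k fun x => M x i j) :
    ContDiff ℝ k M := by
  classical
  have hsum : M = fun x => ∑ i, ∑ j, M x i j • single i j (1 : ℝ) :=
    funext fun x => by simpa [smul_single] using matrix_eq_sum_single (M x)
  rw [hsum]
  fun_prop

theorem mul_fromBlocks_mul_transpose {R : Type*} [NonUnitalNonAssocSemiring R]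
    (J : Matrix (m ⊕ n) (m ⊕ n) R) (P : Matrix m n R) (P' : Matrix n m R) (Q : Matrix n n R) :
    J * fromBlocks 0 P P' Q * Jᵀ =
      fromBlocks
        (J.toBlocks₁₂ * P' * J.toBlocks₁₁ᵀ + J.toBlocks₁₁ * P * J.toBlocks₁₂ᵀ +
          J.toBlocks₁₂ * Q * J.toBlocks₁₂ᵀ)
        (J.toBlocks₁₂ * P' * J.toBlocks₂₁ᵀ + J.toBlocks₁₁ * P * J.toBlocks₂₂ᵀ +
          J.toBlocks₁₂ * Q * J.toBlocks₂₂ᵀ)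
        (J.toBlocks₂₂ * P' * J.toBlocks₁₁ᵀ + J.toBlocks₂₁ * P * J.toBlocks₁₂ᵀ +
          J.toBlocks₂₂ * Q * J.toBlocks₁₂ᵀ)
        (J.toBlocks₂₂ * P' * J.toBlocks₂₁ᵀ + J.toBlocks₂₁ * P * J.toBlocks₂₂ᵀ +
          J.toBlocks₂₂ * Q * J.toBlocks₂₂ᵀ) := by
  conv_lhs =>
    rw [← fromBlocks_toBlocks J, fromBlocks_transpose, fromBlocks_multiply, fromBlocks_multiply]
  simp only [Matrix.mul_zero, zero_add, Matrix.add_mul, add_assoc]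

end Matrix

section Poisson

open Matrix

variable {n : ℕ} {π : (Fin n → ℝ) → Matrix (Fin n) (Fin n) ℝ}
  {φ : (Fin n → ℝ) × (Fin n → ℝ) → (Fin n → ℝ) × (Fin n → ℝ)}

theorem fderiv_apply_of_map_zero_section {V : Type*} [NormedAddCommGroup V] [NormedSpace ℝ V]
    {f : V × V → V × V} (hf : ∀ x, f (x, 0) = (x, x)) {x : V}
    (hd : DifferentiableAt ℝ f (x, 0)) (w : V) : fderiv ℝ f (x, 0) (w, 0) = (w, w) := by
  have hchain := hd.hasFDerivAt.comp (f := fun y => (y, (0 : V))) x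
    (hasFDerivAt_prodMk_left x 0)
  rw [show f ∘ (fun y => (y, 0)) = fun y => (y, y) from funext hf] at hchain
  exact congrArg (fun T => T w)
    (hchain.unique ((hasFDerivAt_id x).prodMk (hasFDerivAt_id x)))

theorem contDiff_Jmat_apply (hφ : ContDiff ℝ 2 φ) (l m : Fin n ⊕ Fin n) :
    ContDiff ℝ 1 fun p => Jmat φ p l m := by
  have hJ : ContDiff ℝ 1 fun p => fderiv ℝ φ p (basisVec m) :=
    (hφ.fderiv_right (m := 1) (by norm_num)).clm_apply contDiff_const
  cases l with
  | inl i => exact contDiff_pi.1 hJ.fst i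
  | inr i => exact contDiff_pi.1 hJ.snd i

theorem contDiff_submatrix_Jmat (hφ : ContDiff ℝ 2 φ) (r s : Fin n → Fin n ⊕ Fin n) :
    ContDiff ℝ 1 fun p => (Jmat φ p).submatrix r s :=
  contDiff_matrix fun i j => contDiff_Jmat_apply hφ (r i) (s j)

theorem contDiff_transpose_submatrix_Jmat (hφ : ContDiff ℝ 2 φ) (r s : Fin n → Fin n ⊕ Fin n) :
    ContDiff ℝ 1 fun p => ((Jmat φ p).submatrix r s)ᵀ :=
  contDiff_matrix fun i j => contDiff_Jmat_apply hφ (r j) (s i)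

theorem toBlocks₁₁_Jmat (hφ : Differentiable ℝ φ) (h : ∀ x, φ (x, 0) = (x, x)) (x : Fin n → ℝ) :
    (Jmat φ (x, 0)).toBlocks₁₁ = 1 := by
  ext i j
  change (fderiv ℝ φ (x, 0) (Pi.single j 1, 0)).1 i = _
  simp only [fderiv_apply_of_map_zero_section h (hφ _), one_apply, Pi.single_apply]

theorem toBlocks₂₁_Jmat (hφ : Differentiable ℝ φ) (h : ∀ x, φ (x, 0) = (x, x)) (x : Fin n → ℝ) :
    (Jmat φ (x, 0)).toBlocks₂₁ = 1 := by
  ext i j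
  change (fderiv ℝ φ (x, 0) (Pi.single j 1, 0)).2 i = _
  simp only [fderiv_apply_of_map_zero_section h (hφ _), one_apply, Pi.single_apply]

theorem pilin_eq_fromBlocks (hπ : Differentiable ℝ π) (p : (Fin n → ℝ) × (Fin n → ℝ)) :
    pilin π p = fromBlocks 0 (π p.1) (-(π p.1)ᵀ) (fderiv ℝ π p.1 p.2) := by
  rw [pilin]
  congr 1
  ext i j
  have hentry := hasFDerivAt_pi'.1 (hasFDerivAt_pi'.1 (hπ p.1).hasFDerivAt i) j
  exact congrArg (fun T => T p.2) hentry.fderiv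

/-- `φ` maps the zero section onto the diagonal by `(x, 0) ↦ (x, x)` and is a Poisson map from the
linearization of `π` to `π × (-π)` on some neighbourhood of the zero section. -/
structure IsPoissonNearZeroSection (π : (Fin n → ℝ) → Matrix (Fin n) (Fin n) ℝ)
    (φ : (Fin n → ℝ) × (Fin n → ℝ) → (Fin n → ℝ) × (Fin n → ℝ)) : Prop where
  map_zero_section : ∀ x, φ (x, 0) = (x, x)
  poisson : ∀ x, ∀ᶠ p in 𝓝 (x, 0), Jmat φ p * pilin π p * (Jmat φ p)ᵀ = Pprod π (φ p)

namespace IsPoissonNearZeroSection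

theorem transpose_eq_neg (h : IsPoissonNearZeroSection π φ) (hπ : Differentiable ℝ π)
    (hφ : Differentiable ℝ φ) (x : Fin n → ℝ) : (π x)ᵀ = -π x := by
  -- The upper left block of the equation at `(x, 0)` is `π Aᵀ - A πᵀ = π`, with skew left side.
  have hx := congrArg toBlocks₁₁ (h.poisson x).self_of_nhds
  rw [pilin_eq_fromBlocks hπ, mul_fromBlocks_mul_transpose, toBlocks_fromBlocks₁₁, Pprod,
    toBlocks_fromBlocks₁₁, h.map_zero_section, toBlocks₁₁_Jmat hφ h.map_zero_section] at hx
  simp only [map_zero, Matrix.mul_zero, Matrix.zero_mul, add_zero, transpose_one, Matrix.mul_one,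
    Matrix.one_mul, Matrix.mul_neg] at hx
  rw [← hx]
  simp [add_comm]

theorem eventually_fromBlocks_eq (h : IsPoissonNearZeroSection π φ) (hπ : Differentiable ℝ π)
    (hφ : Differentiable ℝ φ) (x : Fin n → ℝ) :
    ∀ᶠ p in 𝓝 (x, 0), Jmat φ p * fromBlocks 0 (π p.1) (π p.1) (fderiv ℝ π p.1 p.2) * (Jmat φ p)ᵀ
      = fromBlocks (π (φ p).1) 0 0 (-π (φ p).2) := by
  filter_upwards [h.poisson x] with p hp
  rwa [pilin_eq_fromBlocks hπ, h.transpose_eq_neg hπ hφ, neg_neg] at hp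

theorem zero_section_relations (h : IsPoissonNearZeroSection π φ) (hπ : Differentiable ℝ π)
    (hφ : Differentiable ℝ φ) (x : Fin n → ℝ) :
    ((Jmat φ (x, 0)).toBlocks₁₂ - 1) * π x + π x * (Jmat φ (x, 0)).toBlocks₁₂ᵀ = 0 ∧
    (Jmat φ (x, 0)).toBlocks₁₂ * π x + π x * (Jmat φ (x, 0)).toBlocks₂₂ᵀ = 0 ∧
    (Jmat φ (x, 0)).toBlocks₂₂ * π x + π x * (Jmat φ (x, 0)).toBlocks₁₂ᵀ = 0 := by
  have hx := (h.eventually_fromBlocks_eq hπ hφ x).self_of_nhds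
  rw [mul_fromBlocks_mul_transpose, h.map_zero_section, toBlocks₁₁_Jmat hφ h.map_zero_section,
    toBlocks₂₁_Jmat hφ h.map_zero_section, fromBlocks_inj] at hx
  simp only [map_zero, Matrix.mul_zero, Matrix.zero_mul, add_zero, transpose_one, Matrix.mul_one,
    Matrix.one_mul] at hx
  refine ⟨?_, hx.2.1, hx.2.2.1⟩
  rw [Matrix.sub_mul, Matrix.one_mul, sub_add_eq_add_sub, hx.1, sub_self]

theorem fderiv_mem_orbitTangent (h : IsPoissonNearZeroSection π φ) (hπ : Differentiable ℝ π)
    (hφ : ContDiff ℝ 2 φ) (w : Fin n → ℝ) :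
    (fun x => fderiv ℝ π x w) ∈
      orbitTangent (continuousSubring (Fin n → ℝ) (Matrix (Fin n) (Fin n) ℝ)) π := by
  have hφ' : Differentiable ℝ φ := hφ.differentiable two_ne_zero
  have hrel := h.zero_section_relations hπ hφ'
  have hJ₁₁ := toBlocks₁₁_Jmat hφ' h.map_zero_section
  have hJ₂₁ := toBlocks₂₁_Jmat hφ' h.map_zero_section
  have hzero {f : (Fin n → ℝ) × (Fin n → ℝ) → Matrix (Fin n) (Fin n) ℝ} (hf : ContDiff ℝ 1 f) :
      ContDiff ℝ 1 fun x => f (x, 0) := by fun_prop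
  have hA : ContDiff ℝ 1 fun p => (Jmat φ p).toBlocks₁₂ := contDiff_submatrix_Jmat hφ .inl .inr
  have hB : ContDiff ℝ 1 fun p => (Jmat φ p).toBlocks₂₂ := contDiff_submatrix_Jmat hφ .inr .inr
  have hA' : ContDiff ℝ 1 fun p => (Jmat φ p).toBlocks₁₂ᵀ :=
    contDiff_transpose_submatrix_Jmat hφ .inl .inr
  have hB' : ContDiff ℝ 1 fun p => (Jmat φ p).toBlocks₂₂ᵀ :=
    contDiff_transpose_submatrix_Jmat hφ .inr .inr
  have hblocks (x : Fin n → ℝ) := h.eventually_fromBlocks_eq hπ hφ' x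
  simp only [mul_fromBlocks_mul_transpose, fromBlocks_inj] at hblocks
  refine mem_orbitTangent_of_sylvester (hzero hA).continuous (hzero hA').continuous
    (hzero hB).continuous (hzero hB').continuous (funext fun x => (hrel x).2.1)
    (funext fun x => (hrel x).2.2) ?_ ?_ ?_ ?_ ?_
  · exact mul_fderiv_add_fderiv_mul_mem_orbitTangent hπ ((hzero hA).sub contDiff_const)
      (hzero hA') (fun x => (hrel x).1) w
  · exact mul_fderiv_add_fderiv_mul_mem_orbitTangent hπ (hzero hA) (hzero hB')
      (fun x => (hrel x).2.1) w
  · exact mul_fderiv_add_fderiv_mul_mem_orbitTangent hπ (hzero hB) (hzero hA')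
      (fun x => (hrel x).2.2) w
  · exact mul_apply_mul_mem_orbitTangent (contDiff_submatrix_Jmat hφ .inl .inl) hA
      (contDiff_transpose_submatrix_Jmat hφ .inr .inl) hB' hJ₁₁
      (fun x => transpose_eq_one.2 (hJ₂₁ x)) (fun x => (hblocks x).mono fun p hp => hp.2.1) w
  · exact mul_apply_mul_mem_orbitTangent (contDiff_submatrix_Jmat hφ .inr .inl) hB
      (contDiff_transpose_submatrix_Jmat hφ .inl .inl) hA' hJ₂₁
      (fun x => transpose_eq_one.2 (hJ₁₁ x)) (fun x => (hblocks x).mono fun p hp => hp.2.2.1) w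

end IsPoissonNearZeroSection

end Poisson

theorem stmt11_general {n : ℕ} {π : (Fin n → ℝ) → Matrix (Fin n) (Fin n) ℝ}
    {φ : (Fin n → ℝ) × (Fin n → ℝ) → (Fin n → ℝ) × (Fin n → ℝ)}
    (hπ : ∀ i j, Differentiable ℝ fun x => π x i j) (hφ : ContDiff ℝ 2 φ)
    (h : IsPoissonNearZeroSection π φ) (x y : Fin n → ℝ) : (π x).rank = (π y).rank := by
  have hπ' : Differentiable ℝ π := differentiable_pi.2 fun i => differentiable_pi.2 (hπ i)
  exact rank_eq_of_fderiv_mem_orbitTangent hπ' (h.fderiv_mem_orbitTangent hπ' hφ) x y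

theorem stmt11 {n : ℕ} (π : (Fin n → ℝ) → Matrix (Fin n) (Fin n) ℝ)
    (hsmooth : ∀ i j, ContDiff ℝ (⊤ : ℕ∞) fun x => π x i j)
    (hskew : ∀ x, (π x)ᵀ = -(π x))
    (hjac : ∀ (x : Fin n → ℝ) (i j k : Fin n),
      ∑ l, (π x l i * fderiv ℝ (fun z => π z j k) x (Pi.single l 1)
        + π x l j * fderiv ℝ (fun z => π z k i) x (Pi.single l 1)
        + π x l k * fderiv ℝ (fun z => π z i j) x (Pi.single l 1)) = 0)
    (W₁ W₂ : Set ((Fin n → ℝ) × (Fin n → ℝ)))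
    (hW₁ : IsOpen W₁) (hW₂ : IsOpen W₂)
    (hzero : ∀ x : Fin n → ℝ, (x, (0 : Fin n → ℝ)) ∈ W₁)
    (φ ψ : (Fin n → ℝ) × (Fin n → ℝ) → (Fin n → ℝ) × (Fin n → ℝ))
    (hφ : ContDiff ℝ (⊤ : ℕ∞) φ) (hψ : ContDiff ℝ (⊤ : ℕ∞) ψ)
    (hψφ : ∀ p ∈ W₁, ψ (φ p) = p) (hφψ : ∀ p ∈ W₂, φ (ψ p) = p)
    (himg : φ '' W₁ = W₂)
    (hdiag : ∀ x : Fin n → ℝ, φ (x, 0) = (x, x))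
    (hpoisson : ∀ p ∈ W₁, Jmat φ p * pilin π p * (Jmat φ p)ᵀ = Pprod π (φ p)) :
    ∀ x : Fin n → ℝ, ∃ N ∈ nhds x, ∀ y ∈ N, (π y).rank = (π x).rank := fun x =>
  ⟨Set.univ, Filter.univ_mem, fun y _ => stmt11_general
    (fun i j => (hsmooth i j).differentiable (by norm_num)) (contDiff_infty.1 hφ 2)
    ⟨hdiag, fun x => Filter.eventually_of_mem (hW₁.mem_nhds (hzero x)) hpoisson⟩ y x⟩
end
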